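/- The set ACG*([a,b]) of generalized absolutely continuous (in the restricted sense) functions is a coanalytic subset of the Polish space C[a,b], but it is not a Borel subset of C[a,b]. -/

import Mathlib

open MeasureTheory Set Filter

noncomputable section

attribute [local instance] Classical.propDecidable

/-- The oscillation `ω(F, J)` of `F` on the set `J`. -/
def osc (F : ℝ → ℝ) (J : Set ℝ) : ℝ :=
  sSup {d : ℝ | ∃ x ∈ J, ∃ y ∈ J, d = |F x - F y|}

/-- `D` is a `K`-edged pre-partition of `[a,b]`: a finite nonempty collection of
pairwise non-overlapping closed subintervals of `[a,b]` whose endpoints lie in `K`. -/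
def IsPrePartition (a b : ℝ) (K : Set ℝ) (D : Finset (ℝ × ℝ)) : Prop :=
  D.Nonempty ∧
  (∀ p ∈ D, p.1 ≤ p.2 ∧ p.1 ∈ K ∧ p.2 ∈ K ∧ Icc p.1 p.2 ⊆ Icc a b) ∧
  (D : Set (ℝ × ℝ)).Pairwise fun p q => p.2 ≤ q.1 ∨ q.2 ≤ p.1

/-- `F ∈ AC_*(K)`: absolute continuity in the restricted sense on `K`. -/
def ACStar (a b : ℝ) (F : ℝ → ℝ) (K : Set ℝ) : Prop :=
  ∀ ε > (0:ℝ), ∃ δ > (0:ℝ), ∀ D : Finset (ℝ × ℝ), IsPrePartition a b K D →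
    (∑ p ∈ D, (p.2 - p.1)) < δ → (∑ p ∈ D, osc F (Icc p.1 p.2)) < ε

/-- `F ∈ ACG_*(K)`: `K` is a countable union of closed sets `Kₙ ⊆ [a,b]` with `F ∈ AC_*(Kₙ)`. -/
def ACGStar (a b : ℝ) (F : ℝ → ℝ) (K : Set ℝ) : Prop :=
  ∃ C : ℕ → Set ℝ, (∀ n, IsClosed (C n) ∧ C n ⊆ Icc a b ∧ ACStar a b F (C n)) ∧
    K = ⋃ n, C n

/-- `F` is the indefinite Denjoy integral of `f` on `[a,b]`:
`F` is continuous on `[a,b]`, `F(a) = 0`, `F ∈ ACG_*([a,b])`, and `F' = f` a.e. on `[a,b]`. -/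
def HasDenjoyIntegralFn (a b : ℝ) (f F : ℝ → ℝ) : Prop :=
  ContinuousOn F (Icc a b) ∧ F a = 0 ∧ ACGStar a b F (Icc a b) ∧
    ∀ᵐ x ∂(volume.restrict (Icc a b)), HasDerivAt F (f x) x

/-- `f ∈ Den[a,b]`: `f` is Denjoy integrable on `[a,b]`. -/
def DenjoyIntegrable (a b : ℝ) (f : ℝ → ℝ) : Prop :=
  ∃ F : ℝ → ℝ, HasDenjoyIntegralFn a b f F

/-- The Denjoy integral `∫_a^b f` (junk value `0` if `f` is not Denjoy integrable). -/
def denjoyIntegral (a b : ℝ) (f : ℝ → ℝ) : ℝ :=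
  if h : DenjoyIntegrable a b f then Classical.choose h b else 0

/-!
If `F` is not in `ACG_*([a, b])`, removing from `[a, b]` every rational interval on which it is
leaves a nonempty set on no portion of which `F` is in `AC_*`. Countably many points of it already
witness this, and conversely, by the Baire category theorem, such points exclude `ACG_*`. So `F`
fails to be in `ACG_*([a, b])` exactly when there is a sequence of points satisfying a Borel
condition: the complement of `ACG_*([a, b])` is analytic.

By a diagonal argument, the trees without infinite branch do not form an analytic set, and they are
the preimage of `ACG_*([a, b])` under a continuous map. Words index nested intervals, each with a
gap on its right, and a tree `T` is sent to a sum of tents over the gaps of the words labelled by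
`T`. Along a path that leaves `T` the sum is eventually zero, so without infinite branch `[a, b]`
is covered by countably many intervals on which the sum is a single Lipschitz tent or zero.
Every label is repeated infinitely often among the children of a word, with heights forming a
harmonic series: an infinite branch of `T` thus produces points near which the oscillations are
never summable.
-/

/-! ### Trees with an infinite branch -/

/-- `T`, viewed as a set of finite words, contains all the initial segments of some infinite
sequence. As in `PiNat.res`, words are read backwards: the head of the list is the last letter. -/
def HasInfiniteBranch (T : List ℕ → Bool) : Prop :=
  ∃ y : ℕ → ℕ, ∀ n, T (PiNat.res y n)

/-- The diagonal set of words against a parametrised family `f` of sets of words: it has an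
infinite branch exactly when it belongs to the family. -/
def diagonalTree (f : (ℕ → ℕ) → List ℕ → Bool) (s : List ℕ) : Bool :=
  decide (∃ z, PiNat.res z s.length = s ∧
    ∀ t : List ℕ, (h : t.length < s.length) → f z t = diagonalTree f t)
termination_by s.length

lemma diagonalTree_res_iff {f : (ℕ → ℕ) → List ℕ → Bool} {y : ℕ → ℕ} {n : ℕ} :
    diagonalTree f (PiNat.res y n) ↔
      ∃ z, PiNat.res z n = PiNat.res y n ∧
        ∀ t : List ℕ, t.length < n → f z t = diagonalTree f t := by
  rw [diagonalTree]
  simp only [PiNat.res_length, decide_eq_true_eq]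

lemma hasInfiniteBranch_diagonalTree_iff {f : (ℕ → ℕ) → List ℕ → Bool} (hf : Continuous f) :
    HasInfiniteBranch (diagonalTree f) ↔ diagonalTree f ∈ range f := by
  constructor
  · rintro ⟨y, hy⟩
    choose z hzy hzf using fun n => diagonalTree_res_iff.1 (hy n)
    have hz : Tendsto z atTop (nhds y) := by
      refine tendsto_pi_nhds.2 fun i => tendsto_const_nhds.congr' ?_
      filter_upwards [eventually_gt_atTop i] with n hn
      exact (PiNat.res_eq_res.1 (hzy n) hn).symm
    have hfz : Tendsto (fun n => f (z n)) atTop (nhds (diagonalTree f)) := by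
      refine tendsto_pi_nhds.2 fun t => tendsto_const_nhds.congr' ?_
      filter_upwards [eventually_gt_atTop t.length] with n hn
      exact (hzf n t hn).symm
    exact ⟨y, tendsto_nhds_unique ((hf.tendsto y).comp hz) hfz⟩
  · rintro ⟨z, hz⟩
    exact ⟨z, fun n => diagonalTree_res_iff.2 ⟨z, rfl, fun t _ => by rw [hz]⟩⟩

theorem not_analyticSet_compl_hasInfiniteBranch :
    ¬ AnalyticSet {T : List ℕ → Bool | HasInfiniteBranch T}ᶜ := by
  rw [AnalyticSet, not_or]
  constructor
  · exact nonempty_iff_ne_empty.1 ⟨fun _ => false, fun ⟨_, hy⟩ => Bool.false_ne_true (hy 0)⟩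
  · rintro ⟨f, hf, hrange⟩
    have h := hasInfiniteBranch_diagonalTree_iff hf
    rw [hrange] at h
    exact not_iff_self h.symm

/-! ### Oscillation and absolute continuity -/

lemma abs_sub_le_osc {F : ℝ → ℝ} {J : Set ℝ} (hJ : IsCompact J) (hF : ContinuousOn F J)
    {x y : ℝ} (hx : x ∈ J) (hy : y ∈ J) : |F x - F y| ≤ osc F J := by
  refine le_csSup ?_ ⟨x, hx, y, hy, rfl⟩
  refine (Metric.isBounded_iff.1 (hJ.image_of_continuousOn hF).isBounded).imp fun C hC => ?_
  rintro _ ⟨x, hx, y, hy, rfl⟩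
  exact hC (mem_image_of_mem F hx) (mem_image_of_mem F hy)

lemma osc_nonneg (F : ℝ → ℝ) (J : Set ℝ) : 0 ≤ osc F J := by
  refine Real.sSup_nonneg ?_
  rintro _ ⟨x, -, y, -, rfl⟩
  exact abs_nonneg _

lemma osc_le {F : ℝ → ℝ} {J : Set ℝ} {L : ℝ} (hL : 0 ≤ L)
    (h : ∀ x ∈ J, ∀ y ∈ J, |F x - F y| ≤ L) : osc F J ≤ L := by
  refine Real.sSup_le ?_ hL
  rintro _ ⟨x, hx, y, hy, rfl⟩
  exact h x hx y hy

lemma osc_congr {F G : ℝ → ℝ} {J : Set ℝ} (h : EqOn F G J) : osc F J = osc G J := by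
  unfold osc
  congr! 3 with d
  refine exists_congr fun x => and_congr_right fun hx => exists_congr fun y =>
    and_congr_right fun hy => ?_
  rw [h hx, h hy]

lemma osc_singleton (F : ℝ → ℝ) (x : ℝ) : osc F {x} = 0 := by
  refine (osc_le le_rfl ?_).antisymm (osc_nonneg F _)
  rintro _ rfl _ rfl
  rw [sub_self, abs_zero]

section

variable {a b : ℝ} {F G : ℝ → ℝ} {K L : Set ℝ}

lemma IsPrePartition.mono {D : Finset (ℝ × ℝ)} (hD : IsPrePartition a b K D) (hKL : K ⊆ L) :
    IsPrePartition a b L D :=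
  ⟨hD.1, fun p hp => (hD.2.1 p hp).imp_right fun h => ⟨hKL h.1, hKL h.2.1, h.2.2⟩, hD.2.2⟩

lemma ACStar.mono (h : ACStar a b F L) (hKL : K ⊆ L) : ACStar a b F K := fun ε hε =>
  (h ε hε).imp fun _ hδ => ⟨hδ.1, fun D hD => hδ.2 D (hD.mono hKL)⟩

lemma ACStar.congr (h : ACStar a b F K) (hFG : EqOn F G (Icc a b)) : ACStar a b G K := by
  intro ε hε
  obtain ⟨δ, hδ, H⟩ := h ε hε
  refine ⟨δ, hδ, fun D hD hlt => ?_⟩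
  rw [← Finset.sum_congr rfl fun p hp => osc_congr (hFG.mono (hD.2.1 p hp).2.2.2)]
  exact H D hD hlt

lemma ACStar.of_subsingleton (hK : K.Subsingleton) : ACStar a b F K := by
  intro ε hε
  refine ⟨1, one_pos, fun D hD _ => ?_⟩
  refine (Finset.sum_nonpos fun p hp => ?_).trans_lt hε
  obtain ⟨-, hp₁, hp₂, -⟩ := hD.2.1 p hp
  rw [hK hp₁ hp₂, Icc_self, osc_singleton]

lemma ACStar.of_lipschitzOnWith {C : NNReal} (hK : K.OrdConnected) (hF : LipschitzOnWith C F K) :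
    ACStar a b F K := by
  intro ε hε
  have hC : 0 < (C : ℝ) + 1 := by positivity
  refine ⟨ε / (C + 1), by positivity, fun D hD hlt => ?_⟩
  calc ∑ p ∈ D, osc F (Icc p.1 p.2)
      ≤ ∑ p ∈ D, (C + 1) * (p.2 - p.1) := by
        refine Finset.sum_le_sum fun p hp => ?_
        obtain ⟨hle, hp₁, hp₂, -⟩ := hD.2.1 p hp
        have hlen : 0 ≤ p.2 - p.1 := sub_nonneg.2 hle
        refine osc_le (mul_nonneg hC.le hlen) fun x hx y hy => ?_
        calc |F x - F y| ≤ C * |x - y| :=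
              hF.dist_le_mul x (hK.out hp₁ hp₂ hx) y (hK.out hp₁ hp₂ hy)
          _ ≤ (C + 1) * (p.2 - p.1) :=
              mul_le_mul (by linarith) (Real.dist_le_of_mem_Icc hx hy) (abs_nonneg _) hC.le
    _ = (C + 1) * ∑ p ∈ D, (p.2 - p.1) := (Finset.mul_sum _ _ _).symm
    _ < ε := (lt_div_iff₀' hC).1 hlt

lemma ACStar.exists_sum_osc_lt {ι : Type*} (h : ACStar a b F K) (hK : K ⊆ Icc a b) {ε : ℝ}
    (hε : 0 < ε) : ∃ δ > 0, ∀ (d : Finset ι) (u v : ι → ℝ),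
      (∀ i ∈ d, u i ≤ v i ∧ u i ∈ K ∧ v i ∈ K) →
      ((d : Set ι).Pairwise fun i j => v i ≤ u j ∨ v j ≤ u i) →
      ∑ i ∈ d, (v i - u i) < δ → ∑ i ∈ d, osc F (Icc (u i) (v i)) < ε := by
  obtain ⟨δ, hδ, H⟩ := h ε hε
  refine ⟨δ, hδ, fun d u v huv hdisj hlt => ?_⟩
  rcases d.eq_empty_or_nonempty with rfl | hd
  · simpa only [Finset.sum_empty] using hε
  have hsum (g : ℝ × ℝ → ℝ) (hg : ∀ t, g (t, t) = 0) :
      ∑ p ∈ d.image (fun i => (u i, v i)), g p = ∑ i ∈ d, g (u i, v i) := by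
    refine Finset.sum_image_of_pairwise_eq_zero fun i hi j hj hij hEq => ?_
    obtain ⟨hu, hv⟩ := Prod.mk.inj hEq
    have hle : v i ≤ u i := (hdisj hi hj hij).elim (·.trans_eq hu.symm) hv.trans_le
    rw [hle.antisymm (huv i hi).1, hg]
  have hD : IsPrePartition a b K (d.image fun i => (u i, v i)) := by
    refine ⟨hd.image _, Finset.forall_mem_image.2 fun i hi => ?_, ?_⟩
    · obtain ⟨hle, hu, hv⟩ := huv i hi
      exact ⟨hle, hu, hv, Icc_subset_Icc (hK hu).1 (hK hv).2⟩
    · rw [Finset.coe_image]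
      rintro _ ⟨i, hi, rfl⟩ _ ⟨j, hj, rfl⟩ hij
      exact hdisj hi hj fun h => hij (h ▸ rfl)
  rw [← hsum (fun p => osc F (Icc p.1 p.2)) fun t => by rw [Icc_self, osc_singleton]]
  exact H _ hD ((hsum (fun p => p.2 - p.1) fun t => sub_self t).trans_lt hlt)

theorem ACStar.summable_osc (h : ACStar a b F K) (hK : K ⊆ Icc a b) {u : ℕ → ℝ}
    (hu : StrictMono u) (huK : ∀ n, u n ∈ K) :
    Summable fun j => osc F (Icc (u j) (u (j + 1))) := by
  obtain ⟨δ, hδ, H⟩ := h.exists_sum_osc_lt (ι := ℕ) hK one_pos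
  have hbdd : BddAbove (range u) := ⟨b, forall_mem_range.2 fun n => (hK (huK n)).2⟩
  obtain ⟨J, hJ⟩ : ∃ J, (⨆ n, u n) - δ < u J := exists_lt_of_lt_ciSup (by linarith)
  refine (summable_nat_add_iff J).1 ?_
  refine summable_of_sum_range_le (c := 1) (fun j => osc_nonneg _ _) fun n => ?_
  refine (H _ _ _ (fun j _ => ⟨(hu (j + J).lt_succ_self).le, huK _, huK _⟩) ?_ ?_).le
  · intro i _ j _ hij
    exact hij.lt_or_gt.imp (fun h => hu.monotone (by lia)) fun h => hu.monotone (by lia)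
  · calc ∑ j ∈ Finset.range n, (u (j + J + 1) - u (j + J))
        = u (n + J) - u (0 + J) := by
          rw [← Finset.sum_range_sub fun j => u (j + J)]
          simp only [Nat.add_right_comm]
      _ ≤ (⨆ n, u n) - u J := by
          rw [Nat.zero_add]
          exact sub_le_sub_right (le_ciSup hbdd _) _
      _ < δ := by linarith

/-! ### Generalized absolute continuity and its kernel -/

lemma acStar_iff_forall_nat : ACStar a b F K ↔ ∀ n : ℕ, ∃ m : ℕ, ∀ D, IsPrePartition a b K D →
    ∑ p ∈ D, (p.2 - p.1) < 1 / ((m : ℝ) + 1) →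
      ∑ p ∈ D, osc F (Icc p.1 p.2) < 1 / ((n : ℝ) + 1) := by
  constructor
  · intro h n
    obtain ⟨δ, hδ, H⟩ := h (1 / ((n : ℝ) + 1)) Nat.one_div_pos_of_nat
    obtain ⟨m, hm⟩ := exists_nat_one_div_lt hδ
    exact ⟨m, fun D hD hlt => H D hD (hlt.trans hm)⟩
  · intro h ε hε
    obtain ⟨n, hn⟩ := exists_nat_one_div_lt hε
    obtain ⟨m, H⟩ := h n
    exact ⟨1 / ((m : ℝ) + 1), Nat.one_div_pos_of_nat, fun D hD hlt => (H D hD hlt).trans hn⟩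

lemma exists_countable_subset_not_acStar (h : ¬ ACStar a b F K) :
    ∃ C ⊆ K, C.Countable ∧ ¬ ACStar a b F C := by
  rw [acStar_iff_forall_nat] at h
  push Not at h
  obtain ⟨n, h⟩ := h
  choose D hD hlen hosc using h
  let C : Set ℝ := ⋃ m, ⋃ p ∈ D m, {p.1, p.2}
  have hC (m : ℕ) (p : ℝ × ℝ) (hp : p ∈ D m) : {p.1, p.2} ⊆ C :=
    subset_iUnion_of_subset m (subset_biUnion_of_mem (u := fun p : ℝ × ℝ => {p.1, p.2}) hp)
  refine ⟨C, ?_, ?_, fun hAC => ?_⟩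
  · refine iUnion_subset fun m => iUnion₂_subset fun p hp => ?_
    obtain ⟨-, hp₁, hp₂, -⟩ := (hD m).2.1 p hp
    exact pair_subset hp₁ hp₂
  · exact countable_iUnion fun m => (D m).countable_toSet.biUnion fun p _ => to_countable _
  · obtain ⟨m, H⟩ := acStar_iff_forall_nat.1 hAC n
    refine (H (D m) ⟨(hD m).1, fun p hp => ?_, (hD m).2.2⟩ (hlen m)).not_ge (hosc m)
    obtain ⟨hle, -, -, hp⟩ := (hD m).2.1 p ‹_›
    exact ⟨hle, hC m p ‹_› (mem_insert _ _), hC m p ‹_› (mem_insert_of_mem _ rfl), hp⟩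

lemma ACStar.acgStar (h : ACStar a b F K) (hK : IsClosed K) (hKab : K ⊆ Icc a b) :
    ACGStar a b F K :=
  ⟨fun _ => K, fun _ => ⟨hK, hKab, h⟩, (iUnion_const K).symm⟩

lemma ACGStar.congr (h : ACGStar a b F K) (hFG : EqOn F G (Icc a b)) : ACGStar a b G K :=
  h.imp fun _ hC => ⟨fun n => (hC.1 n).imp_right fun h => ⟨h.1, h.2.congr hFG⟩, hC.2⟩

theorem ACGStar.of_subset_iUnion {ι : Type*} [Countable ι] {C : ι → Set ℝ} (hK : IsClosed K)
    (hKab : K ⊆ Icc a b) (hC : ∀ i, ACGStar a b F (C i)) (hcov : K ⊆ ⋃ i, C i) :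
    ACGStar a b F K := by
  rcases isEmpty_or_nonempty ι with hι | hι
  · rw [iUnion_of_empty, subset_empty_iff] at hcov
    exact (ACStar.of_subsingleton (hcov ▸ subsingleton_empty)).acgStar hK hKab
  choose B hB hCB using hC
  obtain ⟨e, he⟩ := exists_surjective_nat (ι × ℕ)
  refine ⟨fun n => K ∩ B (e n).1 (e n).2, fun n => ?_, ?_⟩
  · obtain ⟨hclosed, -, hAC⟩ := hB (e n).1 (e n).2
    exact ⟨hK.inter hclosed, inter_subset_left.trans hKab, hAC.mono inter_subset_right⟩
  · rw [← inter_iUnion, he.iUnion_comp fun i => B i.1 i.2, iUnion_prod']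
    simp only [← hCB]
    exact (inter_eq_left.2 hcov).symm

/-- `F` is not in `AC_*` of any portion of `E`. Rational end points keep the quantifiers
countable. -/
def NowhereACStar (a b : ℝ) (F : ℝ → ℝ) (E : Set ℝ) : Prop :=
  ∀ p q : ℚ, (E ∩ Ioo (p : ℝ) q).Nonempty → ¬ ACStar a b F (E ∩ Icc (p : ℝ) q)

lemma exists_rat_Icc_subset_of_mem_nhds {x : ℝ} {U : Set ℝ} (hU : U ∈ nhds x) :
    ∃ p q : ℚ, x ∈ Ioo (p : ℝ) q ∧ Icc (p : ℝ) q ⊆ U := by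
  obtain ⟨l, u, ⟨hl, hu⟩, hlu⟩ := mem_nhds_iff_exists_Ioo_subset.1 hU
  obtain ⟨p, hlp, hpx⟩ := exists_rat_btwn hl
  obtain ⟨q, hxq, hqu⟩ := exists_rat_btwn hu
  exact ⟨p, q, ⟨hpx, hxq⟩, (Icc_subset_Ioo hlp hqu).trans hlu⟩

/-- By the Baire category theorem, one of the closed pieces of `K` would contain a portion
of `E`. -/
theorem NowhereACStar.not_acgStar {E : Set ℝ} (h : NowhereACStar a b F E) (hE : E.Nonempty)
    (hK : IsClosed K) (hEK : E ⊆ K) : ¬ ACGStar a b F K := by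
  rintro ⟨C, hC, hKC⟩
  have : Nonempty (closure E) := hE.closure.to_subtype
  have : CompleteSpace (closure E) := isClosed_closure.completeSpace_coe
  obtain ⟨n, x, hx⟩ : ∃ n, (interior ((↑) ⁻¹' C n : Set (closure E))).Nonempty := by
    refine nonempty_interior_of_iUnion_of_closed
      (fun n => (hC n).1.preimage continuous_subtype_val) ?_
    rw [← preimage_iUnion, ← hKC]
    exact eq_univ_of_forall fun x => closure_minimal hEK hK x.2
  obtain ⟨V, hV, hVC⟩ := mem_nhds_induced _ _ _ |>.1 (mem_interior_iff_mem_nhds.1 hx)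
  obtain ⟨e, heV, heE⟩ := mem_closure_iff_nhds.1 x.2 (interior V) (interior_mem_nhds.2 hV)
  obtain ⟨p, q, he, hpq⟩ := exists_rat_Icc_subset_of_mem_nhds (mem_interior_iff_mem_nhds.1 heV)
  refine h p q ⟨e, heE, he⟩ ((hC n).2.2.mono ?_)
  rintro y ⟨hyE, hy⟩
  exact hVC (a := ⟨y, subset_closure hyE⟩) (hpq hy)

/-- Remove from `K` all the rational intervals on which `F` is `ACG_*`. -/
lemma exists_nowhereACStar_of_not_acgStar (hK : IsClosed K) (hKab : K ⊆ Icc a b)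
    (h : ¬ ACGStar a b F K) : ∃ P ⊆ K, P.Nonempty ∧ NowhereACStar a b F P := by
  let G : Set (ℚ × ℚ) := {r | ACGStar a b F (K ∩ Icc (r.1 : ℝ) r.2)}
  let P : Set ℝ := K \ ⋃ r ∈ G, Ioo (r.1 : ℝ) r.2
  have hP : IsClosed P := hK.sdiff (isOpen_biUnion fun _ _ => isOpen_Ioo)
  have hcov {y : ℝ} (hy : y ∈ K) (hyP : y ∉ P) : ∃ r : G, y ∈ K ∩ Icc (r.1.1 : ℝ) r.1.2 := by
    have hyG : y ∈ ⋃ r ∈ G, Ioo (r.1 : ℝ) r.2 := not_not.1 fun hn => hyP ⟨hy, hn⟩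
    obtain ⟨r, hr, hyr⟩ := mem_iUnion₂.1 hyG
    exact ⟨⟨r, hr⟩, hy, Ioo_subset_Icc_self hyr⟩
  refine ⟨P, sdiff_subset, ?_, ?_⟩
  · by_contra hne
    refine h (.of_subset_iUnion hK hKab (fun r : G => r.2) fun y hy => mem_iUnion.2 ?_)
    exact hcov hy fun hyP => hne ⟨y, hyP⟩
  · rintro p q ⟨x, hxP, hx⟩ hAC
    refine hxP.2 (mem_biUnion (x := (p, q)) ?_ hx)
    refine .of_subset_iUnion (ι := Option G)
      (C := fun r => r.elim (P ∩ Icc (p : ℝ) q) fun r => K ∩ Icc (r.1.1 : ℝ) r.1.2)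
      (hK.inter isClosed_Icc) (inter_subset_left.trans hKab) ?_ ?_
    · rintro (_ | r)
      · exact hAC.acgStar (hP.inter isClosed_Icc)
          ((inter_subset_left.trans sdiff_subset).trans hKab)
      · exact r.2
    · rintro y ⟨hyK, hy⟩
      by_cases hyP : y ∈ P
      · exact mem_iUnion.2 ⟨none, hyP, hy⟩
      · obtain ⟨r, hr⟩ := hcov hyK hyP
        exact mem_iUnion.2 ⟨some r, hr⟩

lemma NowhereACStar.exists_countable {P : Set ℝ} (h : NowhereACStar a b F P) (hP : P.Nonempty) :
    ∃ E ⊆ P, E.Nonempty ∧ E.Countable ∧ NowhereACStar a b F E := by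
  obtain ⟨x, hx⟩ := hP
  choose! C hCP hC hnAC using
    fun (p q : ℚ) (hpq : (P ∩ Ioo (p : ℝ) q).Nonempty) =>
      exists_countable_subset_not_acStar (h p q hpq)
  let I : Set (ℚ × ℚ) := {r | (P ∩ Ioo (r.1 : ℝ) r.2).Nonempty}
  let E : Set ℝ := insert x (⋃ r ∈ I, C r.1 r.2)
  have hEP : E ⊆ P := insert_subset hx
    (iUnion₂_subset fun r hr => (hCP r.1 r.2 hr).trans inter_subset_left)
  refine ⟨E, hEP, insert_nonempty _ _,
    ((to_countable I).biUnion fun r hr => hC r.1 r.2 hr).insert x, fun p q hpq hAC => ?_⟩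
  have hpq : (p, q) ∈ I := hpq.mono (inter_subset_inter_left _ hEP)
  refine hnAC p q hpq (hAC.mono (subset_inter ?_ ((hCP p q hpq).trans inter_subset_right)))
  exact (subset_biUnion_of_mem (u := fun r : ℚ × ℚ => C r.1 r.2) hpq).trans (subset_insert _ _)

theorem not_acgStar_iff_exists_countable (hK : IsClosed K) (hKab : K ⊆ Icc a b) :
    ¬ ACGStar a b F K ↔ ∃ E ⊆ K, E.Nonempty ∧ E.Countable ∧ NowhereACStar a b F E := by
  constructor
  · intro h
    obtain ⟨P, hPK, hP, hnP⟩ := exists_nowhereACStar_of_not_acgStar hK hKab h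
    obtain ⟨E, hEP, hE⟩ := hnP.exists_countable hP
    exact ⟨E, hEP.trans hPK, hE⟩
  · rintro ⟨E, hEK, hE, -, hnE⟩
    exact hnE.not_acgStar hE hK hEK

/-! ### Coanalyticity -/

lemma acStar_range_inter_iff {x : ℕ → ℝ} (hx : ∀ n, x n ∈ Icc a b) {s : Set ℝ} :
    ACStar a b F (range x ∩ s) ↔ ∀ n : ℕ, ∃ m : ℕ, ∀ d : Finset (ℕ × ℕ),
      (∀ i ∈ d, x i.1 ≤ x i.2 ∧ x i.1 ∈ s ∧ x i.2 ∈ s) →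
      ((d : Set (ℕ × ℕ)).Pairwise fun i j => x i.2 ≤ x j.1 ∨ x j.2 ≤ x i.1) →
      ∑ i ∈ d, (x i.2 - x i.1) < 1 / ((m : ℝ) + 1) →
        ∑ i ∈ d, osc F (uIcc (x i.1) (x i.2)) < 1 / ((n : ℝ) + 1) := by
  constructor
  · intro h n
    obtain ⟨δ, hδ, H⟩ := h.exists_sum_osc_lt (ι := ℕ × ℕ)
      (inter_subset_left.trans (range_subset_iff.2 hx)) (Nat.one_div_pos_of_nat (n := n))
    obtain ⟨m, hm⟩ := exists_nat_one_div_lt hδ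
    refine ⟨m, fun d hd hdisj hlt => ?_⟩
    rw [Finset.sum_congr rfl fun i hi => by rw [uIcc_of_le (hd i hi).1]]
    exact H d _ _ (fun i hi => ⟨(hd i hi).1, ⟨mem_range_self _, (hd i hi).2.1⟩,
      ⟨mem_range_self _, (hd i hi).2.2⟩⟩) hdisj (hlt.trans hm)
  · intro h
    refine acStar_iff_forall_nat.2 fun n => (h n).imp fun m H D hD hlt => ?_
    have hDx : SurjOn (fun i : ℕ × ℕ => (x i.1, x i.2)) univ D := by
      intro p hp
      obtain ⟨-, ⟨⟨k, hk⟩, -⟩, ⟨⟨l, hl⟩, -⟩, -⟩ := hD.2.1 p hp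
      exact ⟨(k, l), mem_univ _, Prod.ext hk hl⟩
    obtain ⟨d, -, hinj, rfl⟩ := Finset.exists_subset_injOn_image_eq_of_surjOn _ _ hDx
    obtain ⟨-, hD, hdisj⟩ := hD
    rw [Finset.sum_image hinj] at hlt ⊢
    rw [Finset.forall_mem_image] at hD
    rw [Finset.sum_congr rfl fun i hi => by rw [← uIcc_of_le (hD hi).1]]
    refine H d (fun i hi => ⟨(hD hi).1, (hD hi).2.1.2, (hD hi).2.2.1.2⟩) ?_ hlt
    exact fun i hi j hj hij => hdisj (Finset.mem_image_of_mem _ hi)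
      (Finset.mem_image_of_mem _ hj) (hinj.ne hi hj hij)

lemma osc_uIcc_eq (F : ℝ → ℝ) (u v : ℝ) : osc F (uIcc u v) =
    sSup ((fun r : ℝ × ℝ => |F (AffineMap.lineMap u v r.1) - F (AffineMap.lineMap u v r.2)|) ''
      (Icc 0 1 ×ˢ Icc 0 1)) := by
  rw [osc, ← segment_eq_uIcc, segment_eq_image_lineMap]
  congr 1
  ext d
  constructor
  · rintro ⟨_, ⟨r, hr, rfl⟩, _, ⟨s, hs, rfl⟩, rfl⟩
    exact ⟨(r, s), ⟨hr, hs⟩, rfl⟩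
  · rintro ⟨⟨r, s⟩, ⟨hr, hs⟩, rfl⟩
    exact ⟨_, mem_image_of_mem _ hr, _, mem_image_of_mem _ hs, rfl⟩

lemma continuous_osc_uIcc {X : Type*} [TopologicalSpace X] {f : X → ℝ → ℝ}
    (hf : Continuous fun z : X × ℝ => f z.1 z.2) {u v : X → ℝ} (hu : Continuous u)
    (hv : Continuous v) : Continuous fun z => osc (f z) (uIcc (u z) (v z)) := by
  simp only [osc_uIcc_eq]
  refine (isCompact_Icc.prod isCompact_Icc).continuous_sSup ?_
  simp only [Function.HasUncurry.uncurry, id, AffineMap.lineMap_apply_module]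
  refine continuous_abs.comp (.sub ?_ ?_) <;>
    exact hf.comp (.prodMk (by fun_prop) (by fun_prop))

theorem measurableSet_nowhereACStar_range {X : Type*} [TopologicalSpace X] [MeasurableSpace X]
    [OpensMeasurableSpace X] {f : X → ℝ → ℝ} (hf : Continuous fun z : X × ℝ => f z.1 z.2)
    {x : X → ℕ → ℝ} (hx : Continuous x) (hxab : ∀ z n, x z n ∈ Icc a b) :
    MeasurableSet {z | NowhereACStar a b (f z) (range (x z))} := by
  have hxn (n : ℕ) : Continuous fun z => x z n := (continuous_apply n).comp hx
  have hlt {g h : X → ℝ} (hg : Continuous g) (hh : Continuous h) : Measurable fun z => g z < h z :=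
    measurableSet_setOfPred.1 (isOpen_lt hg hh).measurableSet
  have hle {g h : X → ℝ} (hg : Continuous g) (hh : Continuous h) : Measurable fun z => g z ≤ h z :=
    measurableSet_setOfPred.1 (isClosed_le hg hh).measurableSet
  have hAC (p q : ℚ) :
      Measurable fun z => ACStar a b (f z) (range (x z) ∩ Icc (p : ℝ) q) := by
    simp only [acStar_range_inter_iff (hxab _), Set.Pairwise, mem_Icc]
    refine .forall fun n => .exists fun m => .forall fun d => .imp ?_ (.imp ?_ (.imp ?_ ?_))
    · exact .forall fun i => measurable_const.imp <| (hle (hxn _) (hxn _)).and <|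
        .and (.and (hle continuous_const (hxn _)) (hle (hxn _) continuous_const))
          (.and (hle continuous_const (hxn _)) (hle (hxn _) continuous_const))
    · exact .forall fun i => measurable_const.imp <| .forall fun j => measurable_const.imp <|
        measurable_const.imp <| (hle (hxn _) (hxn _)).or (hle (hxn _) (hxn _))
    · exact hlt (continuous_finsetSum _ fun i _ => (hxn _).sub (hxn _)) continuous_const
    · exact hlt (continuous_finsetSum _ fun i _ => continuous_osc_uIcc hf (hxn _) (hxn _))
        continuous_const
  simp only [NowhereACStar, inter_nonempty, exists_range_iff, mem_Ioo]
  exact measurableSet_setOfPred.2 <| .forall fun p => .forall fun q => .imp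
    (.exists fun n => (hlt continuous_const (hxn n)).and (hlt (hxn n) continuous_const))
    (hAC p q).not

theorem analyticSet_compl_acgStar (hab : a ≤ b) :
    AnalyticSet {F : C(Icc a b, ℝ) |
      ACGStar a b (fun x => F (projIcc a b hab x)) (Icc a b)}ᶜ := by
  let _ : MeasurableSpace ((ℕ → Icc a b) × C(Icc a b, ℝ)) := borel _
  have : BorelSpace ((ℕ → Icc a b) × C(Icc a b, ℝ)) := ⟨rfl⟩
  have hmeas := measurableSet_nowhereACStar_range (a := a) (b := b)
    (f := fun z : (ℕ → Icc a b) × C(Icc a b, ℝ) => fun t => z.2 (projIcc a b hab t))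
    (x := fun z n => z.1 n) (by fun_prop) (by fun_prop) fun z n => (z.1 n).2
  convert hmeas.analyticSet.image_of_continuous continuous_snd using 1
  ext F
  refine (not_acgStar_iff_exists_countable isClosed_Icc Subset.rfl).trans ⟨?_, ?_⟩
  · rintro ⟨E, hEab, hE, hEc, hnE⟩
    obtain ⟨x, rfl⟩ := hEc.exists_eq_range hE
    exact ⟨(fun n => ⟨x n, hEab (mem_range_self n)⟩, F), hnE, rfl⟩
  · rintro ⟨⟨x, F⟩, hnE, rfl⟩
    exact ⟨_, range_subset_iff.2 fun n => (x n).2, range_nonempty _, countable_range _, hnE⟩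

end

/-! ### A system of nested intervals -/

/-- The increasing affine map taking `[u, v)` onto `[0, 1)`. -/
def intervalChart {u v : ℝ} (h : u < v) : ℝ ≃o ℝ :=
  (OrderIso.subRight u).trans (OrderIso.divRight₀ (v - u) (sub_pos.2 h))

lemma intervalChart_apply {u v : ℝ} (h : u < v) (x : ℝ) :
    intervalChart h x = (x - u) / (v - u) := rfl

lemma intervalChart_left {u v : ℝ} (h : u < v) : intervalChart h u = 0 := by
  rw [intervalChart_apply, sub_self, zero_div]

lemma intervalChart_right {u v : ℝ} (h : u < v) : intervalChart h v = 1 :=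
  div_self (sub_pos.2 h).ne'

lemma intervalChart_mem_Ico_iff {u v : ℝ} (h : u < v) {x : ℝ} :
    intervalChart h x ∈ Ico (0 : ℝ) 1 ↔ x ∈ Ico u v := by
  rw [← intervalChart_left h, ← intervalChart_right h, mem_Ico, mem_Ico, OrderIso.le_iff_le,
    OrderIso.lt_iff_lt]

lemma lipschitzWith_intervalChart {u v : ℝ} (h : u < v) :
    LipschitzWith (v - u)⁻¹.toNNReal (intervalChart h) := by
  refine LipschitzWith.of_dist_le_mul fun x y => le_of_eq ?_
  have hinv : 0 ≤ (v - u)⁻¹ := inv_nonneg.2 (sub_nonneg.2 h.le)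
  rw [Real.dist_eq, Real.dist_eq, intervalChart_apply, intervalChart_apply, ← sub_div,
    sub_sub_sub_cancel_right, abs_div, abs_of_pos (sub_pos.2 h), Real.coe_toNNReal _ hinv,
    div_eq_inv_mul]

/-- The points cutting `[0, 1/2)` into infinitely many consecutive intervals. -/
def breakpoint (i : ℕ) : ℝ := 1 / 2 - (1 / 2) ^ (i + 1)

lemma breakpoint_zero : breakpoint 0 = 0 := by norm_num [breakpoint]

lemma breakpoint_strictMono : StrictMono breakpoint := fun _ _ h =>
  sub_lt_sub_left (pow_lt_pow_right_of_lt_one₀ one_half_pos one_half_lt_one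
    (Nat.add_lt_add_right h 1)) _

lemma breakpoint_nonneg (i : ℕ) : 0 ≤ breakpoint i :=
  breakpoint_zero ▸ breakpoint_strictMono.monotone i.zero_le

lemma breakpoint_lt_half (i : ℕ) : breakpoint i < 1 / 2 :=
  sub_lt_self _ (pow_pos one_half_pos _)

lemma tendsto_breakpoint : Tendsto breakpoint atTop (nhds (1 / 2)) := by
  have h : Tendsto (fun i : ℕ => (1 / 2 : ℝ) ^ (i + 1)) atTop (nhds 0) :=
    (tendsto_add_atTop_iff_nat 1).2
      (tendsto_pow_atTop_nhds_zero_of_lt_one one_half_pos.le one_half_lt_one)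
  unfold breakpoint
  simpa only [sub_zero] using h.const_sub (1 / 2)

lemma exists_lt_breakpoint {t : ℝ} (ht : t < 1 / 2) : ∃ i, t < breakpoint (i + 1) :=
  (((tendsto_add_atTop_iff_nat 1).2 tendsto_breakpoint).eventually_const_lt ht).exists

/-- The chart of the `i`-th child interval of `[0, 1)`. -/
def zoom (i : ℕ) : ℝ ≃o ℝ := intervalChart (breakpoint_strictMono i.lt_succ_self)

lemma zoom_mem_Ico_iff {i : ℕ} {t : ℝ} :
    zoom i t ∈ Ico (0 : ℝ) 1 ↔ t ∈ Ico (breakpoint i) (breakpoint (i + 1)) :=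
  intervalChart_mem_Ico_iff _

lemma mem_Ico_zero_half_of_zoom {i : ℕ} {t : ℝ} (h : zoom i t ∈ Ico (0 : ℝ) 1) :
    t ∈ Ico (0 : ℝ) (1 / 2) :=
  Ico_subset_Ico (breakpoint_nonneg i) (breakpoint_lt_half (i + 1)).le (zoom_mem_Ico_iff.1 h)

lemma exists_zoom_mem_Ico {t : ℝ} (ht : t ∈ Ico (0 : ℝ) (1 / 2)) :
    ∃ i, zoom i t ∈ Ico (0 : ℝ) 1 := by
  have hex := exists_lt_breakpoint ht.2
  refine ⟨Nat.find hex, zoom_mem_Ico_iff.2 ⟨?_, Nat.find_spec hex⟩⟩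
  rcases hi : Nat.find hex with _ | i
  · exact breakpoint_zero.trans_le ht.1
  · exact not_lt.1 (Nat.find_min hex (hi ▸ i.lt_succ_self))

lemma eq_of_zoom_mem_Ico {i j : ℕ} {t : ℝ} (hi : zoom i t ∈ Ico (0 : ℝ) 1)
    (hj : zoom j t ∈ Ico (0 : ℝ) 1) : i = j := by
  rw [zoom_mem_Ico_iff] at hi hj
  have hij := breakpoint_strictMono.lt_iff_lt.1 (hi.1.trans_lt hj.2)
  have hji := breakpoint_strictMono.lt_iff_lt.1 (hj.1.trans_lt hi.2)
  lia

lemma zoom_symm_mem_Ico {t : ℝ} (ht : t ∈ Ico (0 : ℝ) 1) (i : ℕ) :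
    (zoom i).symm t ∈ Ico (breakpoint i) (breakpoint (i + 1)) :=
  zoom_mem_Ico_iff.1 (by rwa [OrderIso.apply_symm_apply])

lemma zoom_symm_lt_of_lt {s t : ℝ} (hs : s ∈ Ico (0 : ℝ) 1) (ht : t ∈ Ico (0 : ℝ) 1) {i j : ℕ}
    (hij : i < j) : (zoom i).symm s < (zoom j).symm t :=
  (zoom_symm_mem_Ico hs i).2.trans_le
    ((breakpoint_strictMono.monotone hij).trans (zoom_symm_mem_Ico ht j).1)

lemma tendsto_zoom_symm {t : ℝ} (ht : t ∈ Ico (0 : ℝ) 1) :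
    Tendsto (fun i => (zoom i).symm t) atTop (nhds (1 / 2)) :=
  tendsto_of_tendsto_of_tendsto_of_le_of_le tendsto_breakpoint tendsto_const_nhds
    (fun i => (zoom_symm_mem_Ico ht i).1)
    fun i => (zoom_symm_mem_Ico ht i).2.le.trans (breakpoint_lt_half _).le

/-- The chart of the interval indexed by a word, where `e` is the chart of the interval of the
empty word. The words index a system of nested intervals, the tiles `{x | chart e w x ∈ [0, 1)}`:
the left half of a tile is cut into its children, while its right half, the gap
`{x | chart e w x ∈ [1/2, 1)}`, is never subdivided. -/
def chart (e : ℝ ≃o ℝ) : List ℕ → ℝ ≃o ℝ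
  | [] => e
  | i :: w => (chart e w).trans (zoom i)

lemma chart_append (e : ℝ ≃o ℝ) (v w : List ℕ) : chart e (v ++ w) = chart (chart e w) v := by
  induction v with
  | nil => rfl
  | cons i v ih => rw [List.cons_append, chart, chart, ih]

section

variable {e : ℝ ≃o ℝ} {v w : List ℕ} {x : ℝ}

lemma mem_Ico_of_chart (h : chart e w x ∈ Ico (0 : ℝ) 1) : e x ∈ Ico (0 : ℝ) 1 := by
  induction w with
  | nil => exact h
  | cons i w ih =>
    exact ih (Ico_subset_Ico_right one_half_lt_one.le (mem_Ico_zero_half_of_zoom h))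

lemma chart_intervalChart_symm_mem_Ico {a b t : ℝ} (hab : a < b) (ht : t ∈ Ico (0 : ℝ) 1) :
    (chart (intervalChart hab) w).symm t ∈ Ico a b :=
  (intervalChart_mem_Ico_iff hab).1
    (mem_Ico_of_chart (w := w) (by rwa [OrderIso.apply_symm_apply]))

theorem isSuffix_of_chart_mem (hv : chart e v x ∈ Ico (0 : ℝ) 1)
    (hw : chart e w x ∈ Ico (1 / 2 : ℝ) 1) : v <:+ w := by
  have htile : chart e w x ∈ Ico (0 : ℝ) 1 := Ico_subset_Ico_left one_half_pos.le hw
  induction v using List.reverseRecOn generalizing e w with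
  | nil => exact List.nil_suffix
  | append_singleton v i ih =>
    rw [chart_append] at hv
    have hi : zoom i (e x) ∈ Ico (0 : ℝ) 1 := mem_Ico_of_chart (e := chart e [i]) hv
    rcases w.eq_nil_or_concat' with rfl | ⟨w, j, rfl⟩
    · exact absurd hw.1 (mem_Ico_zero_half_of_zoom hi).2.not_ge
    · rw [chart_append] at hw htile
      obtain rfl : i = j := eq_of_zoom_mem_Ico hi (mem_Ico_of_chart (e := chart e [j]) htile)
      exact List.suffix_append_self_iff.2 (ih hv hw htile)

lemma eq_of_chart_mem_gap (hv : chart e v x ∈ Ico (1 / 2 : ℝ) 1)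
    (hw : chart e w x ∈ Ico (1 / 2 : ℝ) 1) : v = w :=
  have hsub : Ico (1 / 2 : ℝ) 1 ⊆ Ico 0 1 := Ico_subset_Ico_left one_half_pos.le
  (isSuffix_of_chart_mem (hsub hv) hw).eq_of_length_le
    (isSuffix_of_chart_mem (hsub hw) hv).length_le

theorem exists_chart_mem_gap_or_branch (hx : e x ∈ Ico (0 : ℝ) 1) :
    (∃ w, chart e w x ∈ Ico (1 / 2 : ℝ) 1) ∨
      ∃ z : ℕ → ℕ, ∀ n, chart e (PiNat.res z n) x ∈ Ico (0 : ℝ) 1 := by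
  refine or_iff_not_imp_left.2 fun hgap => ?_
  have hchild (w : List ℕ) (hw : chart e w x ∈ Ico (0 : ℝ) 1) :
      ∃ i, chart e (i :: w) x ∈ Ico (0 : ℝ) 1 :=
    exists_zoom_mem_Ico ⟨hw.1, not_le.1 fun h => hgap ⟨w, h, hw.2⟩⟩
  choose! next hnext using hchild
  let word : ℕ → List ℕ := fun n => n.rec [] fun _ w => next w :: w
  have hword (n : ℕ) : PiNat.res (fun m => next (word m)) n = word n := by
    induction n with
    | zero => rfl
    | succ n ih => rw [PiNat.res_succ, ih]
  refine ⟨fun n => next (word n), fun n => ?_⟩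
  rw [hword]
  induction n with
  | zero => exact hx
  | succ n ih => exact hnext _ ih

lemma exists_lipschitzWith_chart {C : NNReal} (he : LipschitzWith C e) (w : List ℕ) :
    ∃ C', LipschitzWith C' (chart e w) := by
  induction w with
  | nil => exact ⟨C, he⟩
  | cons i w ih =>
    obtain ⟨C', hC'⟩ := ih
    exact ⟨_, (lipschitzWith_intervalChart (breakpoint_strictMono i.lt_succ_self)).comp hC'⟩

end

/-! ### Sums of tents over the gaps -/

/-- The tent function of height `1` over `[1/2, 1]`. -/
def tent (t : ℝ) : ℝ := max 0 (1 - |4 * t - 3|)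

lemma tent_half : tent (1 / 2) = 0 := by norm_num [tent]

lemma tent_three_quarters : tent (3 / 4) = 1 := by norm_num [tent]

lemma abs_tent_le_one (t : ℝ) : |tent t| ≤ 1 := by
  rw [tent, abs_of_nonneg (le_max_left _ _)]
  exact max_le zero_le_one (sub_le_self _ (abs_nonneg _))

lemma tent_eq_zero {t : ℝ} (ht : t ∉ Ico (1 / 2 : ℝ) 1) : tent t = 0 := by
  refine max_eq_left (sub_nonpos.2 (not_lt.1 fun h => ht ?_))
  constructor <;> linarith [abs_lt.1 h]

lemma lipschitzWith_tent : LipschitzWith 4 tent := by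
  have hlin : LipschitzWith 4 fun t : ℝ => 4 * t - 3 :=
    LipschitzWith.of_dist_le_mul fun s t => le_of_eq <| by
      rw [Real.dist_eq, Real.dist_eq, sub_sub_sub_cancel_right, ← mul_sub, abs_mul]
      norm_num
  have h := ((LipschitzWith.const (1 : ℝ)).sub (lipschitzWith_one_norm.comp hlin)).const_max 0
  rw [one_mul, zero_add] at h
  exact h

/-- The sum of tents over all the gaps, the one over the gap of `w` having height `c w`. -/
def gapFunction (e : ℝ ≃o ℝ) (c : List ℕ → ℝ) (x : ℝ) : ℝ :=
  ∑' w, c w * tent (chart e w x)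

section

variable {e : ℝ ≃o ℝ} {c : List ℕ → ℝ} {v w : List ℕ} {x : ℝ}

lemma tent_chart_eq_zero_of_ne (hw : chart e w x ∈ Ico (1 / 2 : ℝ) 1) (hvw : v ≠ w) :
    tent (chart e v x) = 0 :=
  tent_eq_zero fun hv => hvw (eq_of_chart_mem_gap hv hw)

lemma gapFunction_of_mem_gap (hw : chart e w x ∈ Ico (1 / 2 : ℝ) 1) :
    gapFunction e c x = c w * tent (chart e w x) :=
  tsum_eq_single w fun v hv => by rw [tent_chart_eq_zero_of_ne hw hv, mul_zero]

lemma gapFunction_eq_zero (hx : chart e v x ∈ Ico (0 : ℝ) 1) (hc : ∀ w, v <:+ w → c w = 0) :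
    gapFunction e c x = 0 := by
  refine (tsum_congr fun w => ?_).trans tsum_zero
  by_cases hw : chart e w x ∈ Ico (1 / 2 : ℝ) 1
  · rw [hc w (isSuffix_of_chart_mem hx hw), zero_mul]
  · rw [tent_eq_zero hw, mul_zero]

lemma abs_gapFunction_sub_sum_lt {s : Finset (List ℕ)} {ε : ℝ} (hε : 0 < ε)
    (hc : ∀ w ∉ s, |c w| < ε) (x : ℝ) :
    |gapFunction e c x - ∑ w ∈ s, c w * tent (chart e w x)| < ε := by
  by_cases hx : ∃ w, chart e w x ∈ Ico (1 / 2 : ℝ) 1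
  · obtain ⟨w, hw⟩ := hx
    have hzero {v : List ℕ} (hv : v ≠ w) : c v * tent (chart e v x) = 0 := by
      rw [tent_chart_eq_zero_of_ne hw hv, mul_zero]
    rw [gapFunction_of_mem_gap hw]
    by_cases hws : w ∈ s
    · rwa [Finset.sum_eq_single_of_mem w hws fun v _ => hzero, sub_self, abs_zero]
    · rw [Finset.sum_eq_zero fun v hv => hzero (ne_of_mem_of_not_mem hv hws), sub_zero, abs_mul]
      exact (mul_le_of_le_one_right (abs_nonneg _) (abs_tent_le_one _)).trans_lt (hc w hws)
  · have hzero (w : List ℕ) : c w * tent (chart e w x) = 0 := by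
      rw [tent_eq_zero fun hw => hx ⟨w, hw⟩, mul_zero]
    simpa only [gapFunction, hzero, tsum_zero, Finset.sum_const_zero, sub_self, abs_zero]

theorem continuous_gapFunction {X : Type*} [TopologicalSpace X] {c : X → List ℕ → ℝ}
    {B : List ℕ → ℝ} (hc : Continuous c) (hcB : ∀ z w, |c z w| ≤ B w)
    (hB : Tendsto B cofinite (nhds 0)) :
    Continuous fun z : X × ℝ => gapFunction e (c z.1) z.2 := by
  refine continuous_of_uniform_approx_of_continuous fun u hu => ?_
  obtain ⟨ε, hε, hεu⟩ := Metric.mem_uniformity_dist.1 hu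
  have hfin := eventually_cofinite.1 (hB.eventually_lt_const hε)
  refine ⟨fun z => ∑ w ∈ hfin.toFinset, c z.1 w * tent (chart e w z.2), ?_, fun z => hεu ?_⟩
  · refine continuous_finsetSum _ fun w _ => .mul ?_ ?_
    · exact (continuous_apply w).comp (hc.comp continuous_fst)
    · exact lipschitzWith_tent.continuous.comp ((chart e w).continuous.comp continuous_snd)
  · refine abs_gapFunction_sub_sum_lt hε (fun w hw => (hcB z.1 w).trans_lt ?_) z.2
    exact not_not.1 fun h => hw (hfin.mem_toFinset.2 h)

lemma closure_preimage_Ico (f : ℝ ≃o ℝ) {u v : ℝ} (h : u < v) :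
    closure (f ⁻¹' Ico u v) = f ⁻¹' Icc u v := by
  rw [← closure_Ico h.ne]
  exact (f.toHomeomorph.preimage_closure _).symm

lemma ACStar.gapFunction_of_eqOn {a b : ℝ} {C : NNReal} (he : LipschitzWith C e)
    (hcont : Continuous (gapFunction e c)) {u v : ℝ} (huv : u < v)
    (h : ∀ x, chart e w x ∈ Ico u v → gapFunction e c x = c w * tent (chart e w x)) :
    ACStar a b (gapFunction e c) (chart e w ⁻¹' Icc u v) := by
  obtain ⟨C', hC'⟩ := exists_lipschitzWith_chart he w
  let g : ℝ → ℝ := fun x => c w * tent (chart e w x)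
  have hg : LipschitzWith (‖c w‖₊ * (4 * C')) g :=
    (lipschitzWith_smul (c w)).comp (lipschitzWith_tent.comp hC')
  have hEq : EqOn (gapFunction e c) g (chart e w ⁻¹' Icc u v) := by
    rw [← closure_preimage_Ico _ huv]
    exact EqOn.closure h hcont hg.continuous
  refine .of_lipschitzOnWith (C := ‖c w‖₊ * (4 * C')) ?_ ?_
  · exact ordConnected_Icc.preimage_mono (chart e w).monotone
  · exact fun x hx y hy => by
      rw [hEq hx, hEq hy]
      exact hg x y

theorem acgStar_gapFunction {a b : ℝ} (hab : a < b)
    (hcont : Continuous (gapFunction (intervalChart hab) c))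
    (h : ∀ z : ℕ → ℕ, ∃ n, ∀ w, PiNat.res z n <:+ w → c w = 0) :
    ACGStar a b (gapFunction (intervalChart hab) c) (Icc a b) := by
  let e := intervalChart hab
  have hpiece {w : List ℕ} {u v : ℝ} (huv : u < v)
      (hw : ∀ x, chart e w x ∈ Ico u v → gapFunction e c x = c w * tent (chart e w x)) :
      ACGStar a b (gapFunction e c) (Icc a b ∩ chart e w ⁻¹' Icc u v) := by
    have hAC := ACStar.gapFunction_of_eqOn (a := a) (b := b) (lipschitzWith_intervalChart hab)
      hcont huv hw
    exact (hAC.mono inter_subset_right).acgStar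
      (isClosed_Icc.inter (isClosed_Icc.preimage (chart e w).continuous)) inter_subset_left
  let D : Set (List ℕ) := {v | ∀ w, v <:+ w → c w = 0}
  let P : Option (List ℕ ⊕ D) → Set ℝ
    | none => {b}
    | some (.inl w) => Icc a b ∩ chart e w ⁻¹' Icc (1 / 2) 1
    | some (.inr w) => Icc a b ∩ chart e w ⁻¹' Icc 0 1
  refine .of_subset_iUnion (C := P) isClosed_Icc Subset.rfl ?_ fun x hx => mem_iUnion.2 ?_
  · rintro (_ | w | w)
    · exact (ACStar.of_subsingleton subsingleton_singleton).acgStar isClosed_singleton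
        (singleton_subset_iff.2 (right_mem_Icc.2 hab.le))
    · exact hpiece one_half_lt_one fun x => gapFunction_of_mem_gap
    · refine hpiece one_pos fun x hx => ?_
      rw [gapFunction_eq_zero hx w.2, w.2 w List.suffix_rfl, zero_mul]
  · rcases eq_or_ne x b with rfl | hxb
    · exact ⟨none, rfl⟩
    have hex : e x ∈ Ico (0 : ℝ) 1 :=
      (intervalChart_mem_Ico_iff hab).2 ⟨hx.1, hx.2.lt_of_ne hxb⟩
    rcases exists_chart_mem_gap_or_branch hex with ⟨w, hw⟩ | ⟨z, hz⟩
    · exact ⟨some (.inl w), hx, Ico_subset_Icc_self hw⟩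
    · obtain ⟨n, hn⟩ := h z
      exact ⟨some (.inr ⟨_, hn⟩), hx, Ico_subset_Icc_self (hz n)⟩

end

/-! ### The reduction -/

/-- The first coordinate of the pair coded by a letter: every label is carried by infinitely many
letters, so that every node of a tree is repeated at infinitely many words. -/
def label (i : ℕ) : ℕ := i.unpair.1

/-- A size of words such that only finitely many words have a bounded size, yet the sizes of the
children of a word with a given label grow only linearly. -/
def weight (w : List ℕ) : ℕ := (w.map fun i => i.unpair.1 + i.unpair.2 + 1).sum

lemma weight_cons (i : ℕ) (w : List ℕ) :
    weight (i :: w) = i.unpair.1 + i.unpair.2 + 1 + weight w := rfl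

lemma finite_setOf_weight_le (n : ℕ) : {w | weight w ≤ n}.Finite := by
  induction n with
  | zero =>
    refine (finite_singleton []).subset fun w hw => ?_
    rcases w with _ | ⟨i, w⟩
    · rfl
    · rw [mem_ofPred_eq, weight_cons] at hw
      lia
  | succ n ih =>
    have hletters : (image2 Nat.pair (Iic n) (Iic n)).Finite :=
      (finite_Iic n).image2 _ (finite_Iic n)
    refine ((hletters.image2 List.cons ih).insert []).subset fun w hw => ?_
    rcases w with _ | ⟨i, w⟩
    · exact mem_insert _ _
    · rw [mem_ofPred_eq, weight_cons] at hw
      have hi : i ∈ image2 Nat.pair (Iic n) (Iic n) :=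
        ⟨i.unpair.1, mem_Iic.2 (by lia), i.unpair.2, mem_Iic.2 (by lia), i.pair_unpair⟩
      exact mem_insert_of_mem _ (mem_image2_of_mem hi (mem_ofPred.2 (by lia)))

lemma tendsto_one_div_weight_add_one :
    Tendsto (fun w => 1 / ((weight w : ℝ) + 1)) cofinite (nhds 0) := by
  refine tendsto_one_div_add_atTop_nhds_zero_nat.comp (tendsto_atTop.2 fun n => ?_)
  refine eventually_cofinite.2 ((finite_setOf_weight_le n).subset fun w hw => ?_)
  exact (not_le.1 hw).le

/-- The heights of the tents attached to `T`: the words all of whose suffixes are labelled by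
words in `T` get a positive height. -/
def treeHeight (T : List ℕ → Bool) (w : List ℕ) : ℝ :=
  if (w.map label).tails.all T then 1 / ((weight w : ℝ) + 1) else 0

lemma abs_treeHeight_le (T : List ℕ → Bool) (w : List ℕ) :
    |treeHeight T w| ≤ 1 / ((weight w : ℝ) + 1) := by
  have hpos : 0 ≤ 1 / ((weight w : ℝ) + 1) := Nat.one_div_pos_of_nat.le
  unfold treeHeight
  split_ifs
  · exact (abs_of_nonneg hpos).le
  · exact abs_zero.trans_le hpos

lemma treeHeight_eq_zero {T : List ℕ → Bool} {v w : List ℕ} (hv : ¬ T (v.map label))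
    (hvw : v <:+ w) : treeHeight T w = 0 :=
  if_neg fun h => hv (List.all_eq_true.1 h _ ((List.mem_tails _ _).2 (hvw.map label)))

lemma continuous_list_all {α : Type*} (l : List α) : Continuous fun p : α → Bool => l.all p := by
  induction l with
  | nil => exact continuous_const
  | cons i l ih =>
    exact (continuous_of_discreteTopology (f := fun r : Bool × Bool => r.1 && r.2)).comp
      ((continuous_apply i).prodMk ih)

lemma continuous_treeHeight : Continuous treeHeight :=
  continuous_pi fun w => (continuous_of_discreteTopology
    (f := fun r : Bool => if r then 1 / ((weight w : ℝ) + 1) else 0)).comp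
      (continuous_list_all (w.map label).tails)

lemma continuous_gapFunction_treeHeight (e : ℝ ≃o ℝ) :
    Continuous fun z : (List ℕ → Bool) × ℝ => gapFunction e (treeHeight z.1) z.2 :=
  continuous_gapFunction continuous_treeHeight abs_treeHeight_le tendsto_one_div_weight_add_one

lemma map_res (f : ℕ → ℕ) (z : ℕ → ℕ) (n : ℕ) :
    (PiNat.res z n).map f = PiNat.res (f ∘ z) n := by
  induction n with
  | zero => rfl
  | succ n ih => simp only [PiNat.res_succ, List.map_cons, ih, Function.comp_apply]

theorem acgStar_gapFunction_treeHeight {a b : ℝ} (hab : a < b) {T : List ℕ → Bool}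
    (hT : ¬ HasInfiniteBranch T) :
    ACGStar a b (gapFunction (intervalChart hab) (treeHeight T)) (Icc a b) := by
  refine acgStar_gapFunction hab ((continuous_gapFunction_treeHeight _).comp (.prodMk_right T))
    fun z => ?_
  obtain ⟨n, hn⟩ := not_forall.1 (not_exists.1 hT (label ∘ z))
  exact ⟨n, fun w hw => treeHeight_eq_zero (by rwa [map_res]) hw⟩

lemma treeHeight_of_branch {T : List ℕ → Bool} {y : ℕ → ℕ} (hy : ∀ n, T (PiNat.res y n))
    {w : List ℕ} (hw : w.map label = PiNat.res y w.length) :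
    treeHeight T w = 1 / ((weight w : ℝ) + 1) := by
  refine if_pos ?_
  rw [hw]
  generalize w.length = n
  induction n with
  | zero => exact (Bool.and_true _).trans (hy 0)
  | succ n ih =>
    rw [PiNat.res_succ, List.tails_cons, List.all_cons, ih, Bool.and_true]
    exact hy (n + 1)

section

variable {a b : ℝ} {e : ℝ ≃o ℝ} {c : List ℕ → ℝ} {w : List ℕ} {k : ℕ}

/-- The left end point of the gap of the `j`-th child of `w` with label `k`. -/
def gapPoint (e : ℝ ≃o ℝ) (w : List ℕ) (k j : ℕ) : ℝ :=
  (chart e (Nat.pair k j :: w)).symm (1 / 2)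

lemma pair_right_strictMono (k : ℕ) : StrictMono (Nat.pair k) := fun _ _ h =>
  Nat.pair_lt_pair_right k h

lemma gapPoint_strictMono : StrictMono (gapPoint e w k) := fun i j hij =>
  (chart e w).symm.strictMono (zoom_symm_lt_of_lt (by norm_num) (by norm_num)
    (pair_right_strictMono k hij))

lemma tendsto_gapPoint (e : ℝ ≃o ℝ) (w : List ℕ) (k : ℕ) :
    Tendsto (gapPoint e w k) atTop (nhds ((chart e w).symm (1 / 2))) :=
  ((chart e w).symm.continuous.tendsto _).comp
    ((tendsto_zoom_symm (by norm_num)).comp (pair_right_strictMono k).tendsto_atTop)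

lemma le_osc_gapFunction (hcont : Continuous (gapFunction e c)) (j : ℕ) :
    c (Nat.pair k j :: w) ≤
      osc (gapFunction e c) (Icc (gapPoint e w k j) (gapPoint e w k (j + 1))) := by
  set v := Nat.pair k j :: w
  let peak := (chart e v).symm (3 / 4)
  have hvalue {t : ℝ} (ht : t ∈ Ico (1 / 2 : ℝ) 1) :
      gapFunction e c ((chart e v).symm t) = c v * tent t := by
    rw [gapFunction_of_mem_gap (w := v) (by rwa [OrderIso.apply_symm_apply]),
      OrderIso.apply_symm_apply]
  have hpeak : peak ∈ Icc (gapPoint e w k j) (gapPoint e w k (j + 1)) := by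
    refine ⟨(chart e v).symm.monotone (by norm_num), (chart e w).symm.monotone ?_⟩
    exact (zoom_symm_lt_of_lt (by norm_num) (by norm_num)
      (pair_right_strictMono k j.lt_succ_self)).le
  calc c v = gapFunction e c peak - gapFunction e c (gapPoint e w k j) := by
        rw [gapPoint, hvalue (by norm_num), hvalue (by norm_num), tent_three_quarters, tent_half,
          mul_one, mul_zero, sub_zero]
    _ ≤ _ := (le_abs_self _).trans (abs_sub_le_osc isCompact_Icc hcont.continuousOn hpeak
        (left_mem_Icc.2 (gapPoint_strictMono j.lt_succ_self).le))

/-- The harmonic series makes the oscillations around the gap points not summable. -/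
lemma not_acStar_gapFunction (hcont : Continuous (gapFunction e c)) {K : Set ℝ}
    (hK : K ⊆ Icc a b) {J : ℕ} (hJ : ∀ j ≥ J, gapPoint e w k j ∈ K)
    (hc : ∀ j, c (Nat.pair k j :: w) = 1 / ((weight (Nat.pair k j :: w) : ℝ) + 1)) :
    ¬ ACStar a b (gapFunction e c) K := by
  intro hAC
  have hsum := hAC.summable_osc hK (u := fun j => gapPoint e w k (j + J))
    (gapPoint_strictMono.comp (add_left_strictMono (a := J))) fun j => hJ _ (Nat.le_add_left J j)
  let N := J + k + weight w + 2
  refine Real.not_summable_one_div_natCast ((summable_nat_add_iff N).1 ?_)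
  refine hsum.of_nonneg_of_le (fun j => by positivity) fun j => ?_
  calc 1 / ((j + N : ℕ) : ℝ) = c (Nat.pair k (j + J) :: w) := by
        rw [hc, weight_cons, Nat.unpair_pair]
        push_cast [N]
        ring
    _ ≤ osc _ (Icc (gapPoint e w k (j + J)) (gapPoint e w k (j + J + 1))) :=
        le_osc_gapFunction hcont _
    _ = _ := by rw [Nat.add_right_comm]

end

/-- The midpoints of the tiles whose words are labelled by an initial segment of `y`. -/
def branchPoints (e : ℝ ≃o ℝ) (y : ℕ → ℕ) : Set ℝ :=
  {x | ∃ w : List ℕ, w.map label = PiNat.res y w.length ∧ (chart e w).symm (1 / 2) = x}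

lemma branchPoints_subset_Icc {a b : ℝ} (hab : a < b) (y : ℕ → ℕ) :
    branchPoints (intervalChart hab) y ⊆ Icc a b := by
  rintro _ ⟨w, -, rfl⟩
  exact Ico_subset_Icc_self (chart_intervalChart_symm_mem_Ico hab (by norm_num))

lemma map_label_pair_cons {y : ℕ → ℕ} {w : List ℕ} (hw : w.map label = PiNat.res y w.length)
    (j : ℕ) : (Nat.pair (y w.length) j :: w).map label =
      PiNat.res y (Nat.pair (y w.length) j :: w).length := by
  rw [List.map_cons, List.length_cons, PiNat.res_succ, hw, label, Nat.unpair_pair]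

theorem nowhereACStar_gapFunction_treeHeight {a b : ℝ} (hab : a < b) {T : List ℕ → Bool}
    {y : ℕ → ℕ} (hy : ∀ n, T (PiNat.res y n)) :
    NowhereACStar a b (gapFunction (intervalChart hab) (treeHeight T))
      (branchPoints (intervalChart hab) y) := by
  rintro p q ⟨_, ⟨w, hw, rfl⟩, hpq⟩
  have hchild := map_label_pair_cons hw
  have hcont : Continuous (gapFunction (intervalChart hab) (treeHeight T)) :=
    (continuous_gapFunction_treeHeight _).comp (.prodMk_right T)
  have hmem := (tendsto_gapPoint (intervalChart hab) w (y w.length)).eventually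
    (Icc_mem_nhds hpq.1 hpq.2)
  obtain ⟨J, hJ⟩ := eventually_atTop.1 hmem
  exact not_acStar_gapFunction hcont (inter_subset_left.trans (branchPoints_subset_Icc hab y))
    (fun j hj => ⟨⟨_, hchild j, rfl⟩, hJ j hj⟩) fun j => treeHeight_of_branch hy (hchild j)

theorem acgStar_gapFunction_treeHeight_iff {a b : ℝ} (hab : a < b) {T : List ℕ → Bool} :
    ACGStar a b (gapFunction (intervalChart hab) (treeHeight T)) (Icc a b) ↔
      ¬ HasInfiniteBranch T := by
  refine ⟨?_, acgStar_gapFunction_treeHeight hab⟩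
  rintro h ⟨y, hy⟩
  exact (nowhereACStar_gapFunction_treeHeight hab hy).not_acgStar ⟨_, [], rfl, rfl⟩ isClosed_Icc
    (branchPoints_subset_Icc hab y) h

theorem not_analyticSet_acgStar {a b : ℝ} (hab : a < b) :
    ¬ AnalyticSet {F : C(Icc a b, ℝ) |
      ACGStar a b (fun x => F (projIcc a b hab.le x)) (Icc a b)} := by
  intro h
  let G : C((List ℕ → Bool) × Icc a b, ℝ) :=
    ⟨fun z => gapFunction (intervalChart hab) (treeHeight z.1) z.2,
      (continuous_gapFunction_treeHeight _).comp
        (continuous_fst.prodMk (continuous_subtype_val.comp continuous_snd))⟩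
  have : PolishSpace (List ℕ → Bool) := ⟨⟩
  refine not_analyticSet_compl_hasInfiniteBranch ?_
  convert h.preimage G.curry.continuous using 1
  ext T
  have hEq : EqOn (fun x => G.curry T (projIcc a b hab.le x))
      (gapFunction (intervalChart hab) (treeHeight T)) (Icc a b) := fun x hx => by
    simp only [projIcc_of_mem hab.le hx]
    rfl
  exact (acgStar_gapFunction_treeHeight_iff hab).symm.trans
    ⟨fun hT => hT.congr hEq.symm, fun hT => hT.congr hEq⟩

/-- Theorem: `ACG_*([a,b])` is a coanalytic, non-Borel subset of `C[a,b]`. -/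
theorem acgStar_coanalytic_not_borel (a b : ℝ) (hab : a < b) :
    AnalyticSet {F : C(Icc a b, ℝ) |
        ACGStar a b (fun x => F (projIcc a b hab.le x)) (Icc a b)}ᶜ ∧
    ¬ MeasurableSet[borel C(Icc a b, ℝ)] {F : C(Icc a b, ℝ) |
        ACGStar a b (fun x => F (projIcc a b hab.le x)) (Icc a b)} := by
  let _ : MeasurableSpace C(Icc a b, ℝ) := borel _
  have : BorelSpace C(Icc a b, ℝ) := ⟨rfl⟩
  exact ⟨analyticSet_compl_acgStar hab.le, fun h => not_analyticSet_acgStar hab h.analyticSet⟩
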